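/- (Corollary 1.) Fix integers n ≥ 1, dimensions d_1, d_2, d_{12} with 0 ≤ d_{12} ≤ min(d_1, d_2) and d_1 + d_2 − d_{12} ≤ n, and sample sizes m_1, m_2 ≥ 1. There exists a constant C, depending only on these fixed parameters, such that for every prime power q and every pair of subspaces Π_1, Π_2 of F_q^n with dim(Π_1) = d_1, dim(Π_2) = d_2 and dim(Π_1 ∩ Π_2) = d_{12}, the following holds: if Π̂_1 is the span of m_1 vectors chosen independently and uniformly at random from Π_1 and Π̂_2 is the span of m_2 vectors chosen independently and uniformly at random from Π_2 (all m_1 + m_2 vectors mutually independent), then Prob[ dim(Π̂_1 ∩ Π̂_2) = min( d_{12}, (m_1 + m_2 − (d_1 + d_2 − d_{12}))^+, (m_1 − (d_1 − d_{12}))^+, (m_2 − (d_2 − d_{12}))^+ ) ] ≥ 1 − C/q. -/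

import Mathlib

open scoped Classical

lemma aux_card {F V : Type} [Field F] [Fintype F] [AddCommGroup V] [Module F V] [Fintype V]
    (T : Submodule F V) (hT : T ≠ ⊤) :
    Fintype.card F * (Finset.univ.filter (fun x : V => x ∈ T)).card ≤ Fintype.card V := by
  have h1 : (Finset.univ.filter (fun x : V => x ∈ T)).card = Fintype.card T := by
    rw [Fintype.card_subtype]
  have h2 : Module.finrank F T < Module.finrank F V := Submodule.finrank_lt hT
  rw [h1, Module.card_eq_pow_finrank (K := F) (V := T), Module.card_eq_pow_finrank (K := F) (V := V),
    ← pow_succ']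
  exact Nat.pow_le_pow_right Fintype.card_pos h2

lemma aux_sum {A : Type} [Fintype A] (m : ℕ) (P : (Fin (m + 1) → A) → Prop)
    [DecidablePred P] [∀ x : A, DecidablePred (fun t : Fin m → A => P (Fin.cons x t))] :
    (Finset.univ.filter P).card
      = ∑ x : A, (Finset.univ.filter (fun t : Fin m → A => P (Fin.cons x t))).card := by
  rw [Finset.card_filter, ← (Fin.consEquiv (fun _ => A)).sum_comp, Fintype.sum_prod_type]
  refine Finset.sum_congr rfl fun x _ => ?_
  rw [Finset.card_filter]
  refine Finset.sum_congr rfl fun t _ => ?_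
  by_cases h : P (Fin.cons x t)
  · rw [if_pos h]; exact if_pos h
  · rw [if_neg h]; exact if_neg h

lemma aux_prod {A B : Type} [Fintype A] [Fintype B] (P : A × B → Prop)
    [DecidablePred P] [∀ x : A, DecidablePred (fun t : B => P (x, t))] :
    (Finset.univ.filter P).card
      = ∑ x : A, (Finset.univ.filter (fun t : B => P (x, t))).card := by
  rw [Finset.card_filter, Fintype.sum_prod_type]
  refine Finset.sum_congr rfl fun x _ => ?_
  rw [Finset.card_filter]

lemma aux_prod' {A B : Type} [Fintype A] [Fintype B] (P : A × B → Prop)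
    [DecidablePred P] [∀ t : B, DecidablePred (fun x : A => P (x, t))] :
    (Finset.univ.filter P).card
      = ∑ t : B, (Finset.univ.filter (fun x : A => P (x, t))).card := by
  rw [Finset.card_filter, Fintype.sum_prod_type_right]
  refine Finset.sum_congr rfl fun x _ => ?_
  rw [Finset.card_filter]

lemma aux_main {F V : Type} [Field F] [Fintype F] [AddCommGroup V] [Module F V] [Fintype V]
    (S : Submodule F V) (m : ℕ) : ∀ U : Submodule F V,
    Fintype.card F * (Finset.univ.filter (fun v : Fin m → S =>
      ¬ Module.finrank F ↥(U ⊔ Submodule.span F (Set.range (fun i => (v i : V))))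
        = min (Module.finrank F U + m) (Module.finrank F ↥(U ⊔ S)))).card
      ≤ m * Fintype.card (Fin m → S) := by
  induction m with
  | zero =>
    intro U
    have : Module.finrank F U ≤ Module.finrank F ↥(U ⊔ S) := Submodule.finrank_mono le_sup_left
    have h0 : ∀ v : Fin 0 → S, Submodule.span F (Set.range (fun i => (v i : V))) = ⊥ := by
      intro v
      rw [Set.range_eq_empty, Submodule.span_empty]
    rw [Finset.filter_false_of_mem]
    · simp
    · intro v _
      rw [not_not, h0, sup_bot_eq]
      omega
  | succ m ih =>
    intro U
    rw [aux_sum, Finset.mul_sum]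
    have hspan : ∀ (x : S) (t : Fin m → S),
        U ⊔ Submodule.span F (Set.range (fun i => ((Fin.cons x t : Fin (m + 1) → S) i : V)))
          = (U ⊔ Submodule.span F {(x : V)}) ⊔ Submodule.span F (Set.range (fun i => (t i : V))) := by
      intro x t
      rw [sup_assoc, ← Submodule.span_union]
      congr 2
      ext y
      simp [Fin.exists_fin_succ, eq_comm]
    have hS : ∀ x : S, (U ⊔ Submodule.span F {(x : V)}) ⊔ S = U ⊔ S := by
      intro x
      rw [sup_assoc]
      congr 1
      rw [sup_eq_right, Submodule.span_singleton_le_iff_mem]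
      exact x.2
    have hcard : Fintype.card (Fin (m + 1) → S) = Fintype.card S * Fintype.card (Fin m → S) := by
      simp [pow_succ']
    by_cases hSU : S ≤ U
    · refine le_trans (Finset.sum_le_sum (g := fun _ => 0) ?_) (by simp)
      intro x _
      rw [Finset.filter_false_of_mem]
      · simp
      · intro t _
        rw [not_not, hspan]
        have h1 : (U ⊔ Submodule.span F {(x : V)}) ⊔ Submodule.span F (Set.range (fun i => (t i : V))) = U := by
          rw [sup_assoc, sup_eq_left, sup_le_iff]
          refine ⟨?_, ?_⟩
          · rw [Submodule.span_singleton_le_iff_mem]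
            exact hSU x.2
          · rw [Submodule.span_le]
            rintro _ ⟨i, rfl⟩
            exact hSU (t i).2
        rw [h1, sup_eq_left.2 hSU]
        omega
    · have hT : U.comap S.subtype ≠ ⊤ := by
        intro h
        apply hSU
        intro y hy
        have : (⟨y, hy⟩ : S) ∈ U.comap S.subtype := by rw [h]; trivial
        simpa using this
      have hb := aux_card (F := F) (U.comap S.subtype) hT
      have key : ∀ x ∈ (Finset.univ : Finset S), Fintype.card F * (Finset.univ.filter (fun t : Fin m → S =>
          ¬ Module.finrank F ↥(U ⊔ Submodule.span F
              (Set.range (fun i => ((Fin.cons x t : Fin (m + 1) → S) i : V))))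
            = min (Module.finrank F U + (m + 1)) (Module.finrank F ↥(U ⊔ S)))).card
          ≤ (if x ∈ U.comap S.subtype then Fintype.card F * Fintype.card (Fin m → S) else 0)
            + m * Fintype.card (Fin m → S) := by
        intro x _
        split_ifs with hx
        · refine le_trans ?_ (Nat.le_add_right _ _)
          exact Nat.mul_le_mul_left _ (Finset.card_le_univ _)
        · rw [zero_add]
          have hx' : (x : V) ∉ U := by simpa using hx
          have hx0 : (x : V) ≠ 0 := fun h => hx' (h ▸ U.zero_mem)
          have h := ih (U ⊔ Submodule.span F {(x : V)})
          have hr : Module.finrank F ↥(U ⊔ Submodule.span F {(x : V)}) = Module.finrank F U + 1 := by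
            have h2 := Submodule.finrank_sup_add_finrank_inf_eq U (Submodule.span F {(x : V)})
            have h3 : U ⊓ Submodule.span F {(x : V)} = ⊥ := by
              rw [← disjoint_iff]
              exact (Submodule.disjoint_span_singleton' hx0).2 hx'
            rw [h3, finrank_bot, finrank_span_singleton hx0] at h2
            omega
          rw [hr, hS] at h
          refine le_trans (Nat.mul_le_mul_left _ (Finset.card_le_card ?_)) h
          intro t ht
          rw [Finset.mem_filter] at ht ⊢
          refine ⟨Finset.mem_univ _, ?_⟩
          have ht2 := ht.2
          rw [hspan, show Module.finrank F U + (m + 1) = Module.finrank F U + 1 + m by ring] at ht2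
          exact ht2
      refine le_trans (Finset.sum_le_sum key) ?_
      rw [Finset.sum_add_distrib, ← Finset.sum_filter, Finset.sum_const, Finset.sum_const,
        smul_eq_mul, smul_eq_mul, hcard, Finset.card_univ]
      have := Nat.mul_le_mul_right (Fintype.card (Fin m → S)) hb
      nlinarith [this]

lemma aux_union {A B : Type} [Fintype A] [Fintype B] [Nonempty A] [Nonempty B]
    (q m₁ m₂ : ℕ) (hq : 0 < q) (P1 P3 : A → Prop) (P2 : B → Prop) (P4 : A → B → Prop)
    (G : A × B → Prop) [DecidablePred G]
    [DecidablePred P1] [DecidablePred P2] [DecidablePred P3] [∀ u, DecidablePred (P4 u)]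
    (b1 : q * (Finset.univ.filter P1).card ≤ m₁ * Fintype.card A)
    (b2 : q * (Finset.univ.filter P2).card ≤ m₂ * Fintype.card B)
    (b3 : q * (Finset.univ.filter P3).card ≤ m₁ * Fintype.card A)
    (b4 : ∀ u, q * (Finset.univ.filter (P4 u)).card ≤ m₂ * Fintype.card B)
    (hdet : ∀ ω : A × B, ¬ P1 ω.1 → ¬ P2 ω.2 → ¬ P3 ω.1 → ¬ P4 ω.1 ω.2 → G ω) :
    1 - (2 * (m₁ : ℝ) + 2 * m₂) / q
      ≤ ((Finset.univ.filter G).card : ℝ) / (Fintype.card (A × B) : ℝ) := by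
  have c1 : q * (Finset.univ.filter (fun ω : A × B => P1 ω.1)).card
      ≤ m₁ * Fintype.card A * Fintype.card B := by
    rw [aux_prod' (fun ω : A × B => P1 ω.1), Finset.mul_sum]
    refine le_trans (Finset.sum_le_sum fun u _ => b1) ?_
    rw [Finset.sum_const, Finset.card_univ, smul_eq_mul]
    apply le_of_eq
    ring
  have c3 : q * (Finset.univ.filter (fun ω : A × B => P3 ω.1)).card
      ≤ m₁ * Fintype.card A * Fintype.card B := by
    rw [aux_prod' (fun ω : A × B => P3 ω.1), Finset.mul_sum]
    refine le_trans (Finset.sum_le_sum fun u _ => b3) ?_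
    rw [Finset.sum_const, Finset.card_univ, smul_eq_mul]
    apply le_of_eq
    ring
  have c2 : q * (Finset.univ.filter (fun ω : A × B => P2 ω.2)).card
      ≤ m₂ * Fintype.card A * Fintype.card B := by
    rw [aux_prod (fun ω : A × B => P2 ω.2), Finset.mul_sum]
    refine le_trans (Finset.sum_le_sum fun u _ => b2) ?_
    rw [Finset.sum_const, Finset.card_univ, smul_eq_mul]
    apply le_of_eq
    ring
  have c4 : q * (Finset.univ.filter (fun ω : A × B => P4 ω.1 ω.2)).card
      ≤ m₂ * Fintype.card A * Fintype.card B := by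
    rw [aux_prod (fun ω : A × B => P4 ω.1 ω.2), Finset.mul_sum]
    refine le_trans (Finset.sum_le_sum fun u _ => b4 u) ?_
    rw [Finset.sum_const, Finset.card_univ, smul_eq_mul]
    apply le_of_eq
    ring
  have hcov : Finset.univ.filter (fun ω => ¬ G ω) ⊆
      (Finset.univ.filter (fun ω : A × B => P1 ω.1) ∪ Finset.univ.filter (fun ω : A × B => P2 ω.2))
      ∪ (Finset.univ.filter (fun ω : A × B => P3 ω.1)
        ∪ Finset.univ.filter (fun ω : A × B => P4 ω.1 ω.2)) := by
    intro ω hω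
    simp only [Finset.mem_union, Finset.mem_filter, Finset.mem_univ, true_and] at hω ⊢
    by_contra hc
    push Not at hc
    exact hω (hdet ω hc.1.1 hc.1.2 hc.2.1 hc.2.2)
  have hle := (Finset.card_le_card hcov).trans ((Finset.card_union_le _ _).trans
    (add_le_add (Finset.card_union_le _ _) (Finset.card_union_le _ _)))
  have htot : (Finset.univ.filter G).card + (Finset.univ.filter (fun ω => ¬ G ω)).card
      = Fintype.card (A × B) := by
    rw [Finset.card_filter_add_card_filter_not, Finset.card_univ]
  have hbad : q * (Finset.univ.filter (fun ω => ¬ G ω)).card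
      ≤ (2 * m₁ + 2 * m₂) * Fintype.card (A × B) := by
    rw [Fintype.card_prod]
    nlinarith [Nat.mul_le_mul_left q hle]
  have hq0 : (0 : ℝ) < q := by exact_mod_cast hq
  have hN : (0 : ℝ) < Fintype.card (A × B) := by exact_mod_cast Fintype.card_pos
  have htot' : ((Finset.univ.filter G).card : ℝ) + (Finset.univ.filter (fun ω => ¬ G ω)).card
      = Fintype.card (A × B) := by exact_mod_cast htot
  have hbad' : (q : ℝ) * (Finset.univ.filter (fun ω => ¬ G ω)).card
      ≤ (2 * m₁ + 2 * m₂) * Fintype.card (A × B) := by exact_mod_cast hbad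
  rw [le_div_iff₀ hN, sub_mul, one_mul, div_mul_eq_mul_div, sub_le_iff_le_add, ← htot']
  rw [← htot'] at hbad'
  have : ((Finset.univ.filter (fun ω => ¬ G ω)).card : ℝ)
    ≤ (2 * m₁ + 2 * m₂) * ((Finset.univ.filter G).card + (Finset.univ.filter (fun ω => ¬ G ω)).card) / q := by
    rw [le_div_iff₀ hq0]
    linarith
  linarith

lemma aux_arith (d₁ d₂ d₁₂ m₁ m₂ x : ℕ) (h1 : d₁₂ ≤ d₁) (h2 : d₁₂ ≤ d₂)
    (h : min (min m₁ d₁ + m₂) (min (d₂ + m₁) (d₁ + d₂ - d₁₂)) + x = min m₁ d₁ + min m₂ d₂) :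
    x = min d₁₂ (min (m₁ + m₂ - (d₁ + d₂ - d₁₂)) (min (m₁ - (d₁ - d₁₂)) (m₂ - (d₂ - d₁₂)))) := by
  rcases le_total m₁ d₁ with h3 | h3 <;> rcases le_total m₂ d₂ with h4 | h4 <;>
    simp only [min_eq_left h3, min_eq_right h3, min_eq_left h4, min_eq_right h4] at h <;> omega

/-- Corollary 1: for fixed `n, d₁, d₂, d₁₂, m₁, m₂` there is a constant `C`
such that for every prime power `q` and all subspaces `S₁, S₂` of `F_q^n` with
`dim S₁ = d₁`, `dim S₂ = d₂`, `dim (S₁ ∩ S₂) = d₁₂`, if `Ŝ₁` is the span of `m₁` uniformly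
random vectors of `S₁` and `Ŝ₂` the span of `m₂` uniformly random vectors of `S₂`
(all independent), then with probability at least `1 − C/q`,
`dim (Ŝ₁ ∩ Ŝ₂) = min(d₁₂, (m₁+m₂−(d₁+d₂−d₁₂))^+, (m₁−(d₁−d₁₂))^+, (m₂−(d₂−d₁₂))^+)`. -/
theorem stmt_4 (n d₁ d₂ d₁₂ m₁ m₂ : ℕ) (hn : 1 ≤ n)
    (hd₁₂ : d₁₂ ≤ min d₁ d₂) (hsum : d₁ + d₂ - d₁₂ ≤ n)
    (hm₁ : 1 ≤ m₁) (hm₂ : 1 ≤ m₂) :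
    ∃ C : ℝ, ∀ (q : ℕ), IsPrimePow q →
      ∀ (F : Type) [Field F] [Fintype F], Fintype.card F = q →
      ∀ (S₁ S₂ : Submodule F (Fin n → F)),
        Module.finrank F ↥S₁ = d₁ → Module.finrank F ↥S₂ = d₂ →
        Module.finrank F ↥(S₁ ⊓ S₂) = d₁₂ →
      1 - C / q ≤
        ((Finset.univ.filter (fun ω : (Fin m₁ → ↥S₁) × (Fin m₂ → ↥S₂) =>
            Module.finrank F
              ↥(Submodule.span F (Set.range (fun i => (ω.1 i : Fin n → F))) ⊓
                Submodule.span F (Set.range (fun i => (ω.2 i : Fin n → F))))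
              = min d₁₂ (min (m₁ + m₂ - (d₁ + d₂ - d₁₂))
                  (min (m₁ - (d₁ - d₁₂)) (m₂ - (d₂ - d₁₂)))))).card : ℝ)
          / (Fintype.card ((Fin m₁ → ↥S₁) × (Fin m₂ → ↥S₂)) : ℝ) := by
  rw [le_min_iff] at hd₁₂
  refine ⟨2 * m₁ + 2 * m₂, ?_⟩
  intro q hq F _ _ hF S₁ S₂ h₁ h₂ h₁₂
  subst hF
  let sp₁ : (Fin m₁ → S₁) → Submodule F (Fin n → F) := fun v =>
    Submodule.span F (Set.range (fun i => (v i : Fin n → F)))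
  let sp₂ : (Fin m₂ → S₂) → Submodule F (Fin n → F) := fun v =>
    Submodule.span F (Set.range (fun i => (v i : Fin n → F)))
  have hsup : Module.finrank F ↥(S₂ ⊔ S₁) = d₁ + d₂ - d₁₂ := by
    have := Submodule.finrank_sup_add_finrank_inf_eq S₁ S₂
    rw [sup_comm]
    omega
  -- the four bad events
  let P1 : (Fin m₁ → S₁) → Prop := fun v => ¬ Module.finrank F ↥(⊥ ⊔ sp₁ v)
    = min (Module.finrank F (⊥ : Submodule F (Fin n → F)) + m₁)
      (Module.finrank F ↥((⊥ : Submodule F (Fin n → F)) ⊔ S₁))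
  let P2 : (Fin m₂ → S₂) → Prop := fun v => ¬ Module.finrank F ↥(⊥ ⊔ sp₂ v)
    = min (Module.finrank F (⊥ : Submodule F (Fin n → F)) + m₂)
      (Module.finrank F ↥((⊥ : Submodule F (Fin n → F)) ⊔ S₂))
  let P3 : (Fin m₁ → S₁) → Prop := fun v => ¬ Module.finrank F ↥(S₂ ⊔ sp₁ v)
    = min (Module.finrank F S₂ + m₁) (Module.finrank F ↥(S₂ ⊔ S₁))
  let P4 : (Fin m₁ → S₁) → (Fin m₂ → S₂) → Prop := fun u v => ¬ Module.finrank F ↥(sp₁ u ⊔ sp₂ v)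
    = min (Module.finrank F (sp₁ u) + m₂) (Module.finrank F ↥(sp₁ u ⊔ S₂))
  have b1 : Fintype.card F * (Finset.univ.filter P1).card ≤ m₁ * Fintype.card (Fin m₁ → S₁) := aux_main S₁ m₁ ⊥
  have b2 : Fintype.card F * (Finset.univ.filter P2).card ≤ m₂ * Fintype.card (Fin m₂ → S₂) := aux_main S₂ m₂ ⊥
  have b3 : Fintype.card F * (Finset.univ.filter P3).card ≤ m₁ * Fintype.card (Fin m₁ → S₁) := aux_main S₁ m₁ S₂
  have b4 : ∀ u, Fintype.card F * (Finset.univ.filter (P4 u)).card ≤ m₂ * Fintype.card (Fin m₂ → S₂) :=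
    fun u => aux_main S₂ m₂ (sp₁ u)
  refine aux_union (Fintype.card F) m₁ m₂ hq.pos P1 P3 P2 P4 _ b1 b2 b3 b4 ?_
  intro ω g1 g2 g3 g4
  simp only [P1, P2, P3, P4, not_not] at g1 g2 g3 g4
  rw [bot_sup_eq, bot_sup_eq, finrank_bot, zero_add, h₁] at g1
  rw [bot_sup_eq, bot_sup_eq, finrank_bot, zero_add, h₂] at g2
  rw [h₂, hsup] at g3
  rw [sup_comm S₂] at g3
  rw [g1, g3] at g4
  have := Submodule.finrank_sup_add_finrank_inf_eq (sp₁ ω.1) (sp₂ ω.2)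
  rw [g1, g2, g4] at this
  change Module.finrank F ↥(sp₁ ω.1 ⊓ sp₂ ω.2) = _
  exact aux_arith d₁ d₂ d₁₂ m₁ m₂ _ hd₁₂.1 hd₁₂.2 this
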